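/- For φ ∈ [0, π], define p_s(φ) = (1 + 2·sin(φ/2) + 2^{3/2}·sin((π−φ)/4)·√(sin(φ/2)))^{−2}. Then there exists φ* ∈ (2, 2.1) such that p_s(φ*) ≤ p_s(φ) for all φ ∈ [0, π]; i.e., the worst (minimal) success probability on [0, π] is attained at a phase strictly between 2 and 2.1, and in particular not at φ = π. -/

import Mathlib

/-- The optimal success probability of the post-selected controlled phase gate. -/
noncomputable def pSucc (φ : ℝ) : ℝ :=
  (1 + 2 * Real.sin (φ / 2) +
    2 ^ ((3 : ℝ) / 2) * Real.sin ((Real.pi - φ) / 4) * Real.sqrt (Real.sin (φ / 2))) ^ (-2 : ℤ)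

/-!
Put `x = 2 * sin (φ / 2) - 1`. Since `√2 * sin ((π - φ) / 4) = √(1 - sin (φ / 2))`, the success
probability is `(2 + (x + √(1 - x ^ 2))) ^ (-2)`, and `x + √(1 - x ^ 2)` is the sum of the
coordinates of a point of the unit circle. It is at most `√2`, with equality at `x = √2 / 2`. The
minimum is therefore attained where `sin (φ / 2) = (2 + √2) / 4`, a value that lies between `sin 1`
and `sin (π / 3)`, with `π / 3 < 1.05`.
-/

open Real

theorem add_sqrt_one_sub_sq_le_sqrt_two {x : ℝ} (hx : x ^ 2 ≤ 1) : x + √(1 - x ^ 2) ≤ √2 := by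
  refine le_sqrt_of_sq_le ?_
  calc (x + √(1 - x ^ 2)) ^ 2 ≤ 2 * (x ^ 2 + √(1 - x ^ 2) ^ 2) := add_sq_le
    _ = 2 := by rw [sq_sqrt (sub_nonneg.mpr hx)]; ring

theorem sqrt_two_div_two_add_sqrt_one_sub_sq : √2 / 2 + √(1 - (√2 / 2) ^ 2) = √2 := by
  have hsq : 1 - (√2 / 2) ^ 2 = (√2 / 2) ^ 2 := by
    rw [div_pow, sq_sqrt zero_le_two]
    norm_num
  rw [hsq, sqrt_sq (by positivity), add_halves]

theorem sqrt_two_mul_sin_half {x : ℝ} (h₀ : 0 ≤ x) (h₁ : x ≤ 2 * π) :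
    √2 * sin (x / 2) = √(1 - cos x) := by
  rw [sin_half_eq_sqrt h₀ h₁, ← sqrt_mul zero_le_two, mul_div_cancel₀ _ two_ne_zero]

theorem two_rpow_three_halves : (2 : ℝ) ^ ((3 : ℝ) / 2) = 2 * √2 := by
  rw [show (3 : ℝ) / 2 = 1 + 1 / 2 by norm_num, rpow_add two_pos, rpow_one, ← sqrt_eq_rpow]

theorem two_mul_sqrt_one_sub_mul_sqrt {s : ℝ} (hs : 0 ≤ s) :
    2 * (√(1 - s) * √s) = √(1 - (2 * s - 1) ^ 2) := by
  rw [← sqrt_mul' _ hs, show 1 - (2 * s - 1) ^ 2 = 2 ^ 2 * ((1 - s) * s) by ring,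
    sqrt_mul (sq_nonneg 2), sqrt_sq zero_le_two]

theorem sin_half_nonneg {φ : ℝ} (hφ : φ ∈ Set.Icc 0 (2 * π)) : 0 ≤ sin (φ / 2) :=
  sin_nonneg_of_nonneg_of_le_pi (by linarith [hφ.1]) (by linarith [hφ.2])

theorem pSucc_eq {φ : ℝ} (hφ : φ ∈ Set.Icc 0 π) :
    pSucc φ =
      (2 + ((2 * sin (φ / 2) - 1) + √(1 - (2 * sin (φ / 2) - 1) ^ 2))) ^ (-2 : ℤ) := by
  obtain ⟨h₀, hπ⟩ := hφ
  have hsin : √2 * sin ((π - φ) / 4) = √(1 - sin (φ / 2)) := by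
    rw [← cos_pi_div_two_sub (φ / 2), ← sqrt_two_mul_sin_half (by linarith) (by linarith)]
    ring_nf
  rw [pSucc, two_rpow_three_halves, mul_assoc 2, hsin, mul_assoc 2,
    two_mul_sqrt_one_sub_mul_sqrt (sin_half_nonneg ⟨h₀, by linarith⟩)]
  ring_nf

theorem two_add_sqrt_two_zpow_neg_two_le_pSucc {φ : ℝ} (hφ : φ ∈ Set.Icc 0 π) :
    (2 + √2) ^ (-2 : ℤ) ≤ pSucc φ := by
  rw [pSucc_eq hφ]
  set x := 2 * sin (φ / 2) - 1
  have hx₀ : -1 ≤ x := by linarith [sin_half_nonneg ⟨hφ.1, by linarith [hφ.2, pi_pos]⟩]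
  have hx₁ : x ≤ 1 := by linarith [sin_le_one (φ / 2)]
  have hpos : 0 < 2 + (x + √(1 - x ^ 2)) := by linarith [sqrt_nonneg (1 - x ^ 2)]
  have hle : x + √(1 - x ^ 2) ≤ √2 :=
    add_sqrt_one_sub_sq_le_sqrt_two ((sq_le_one_iff_abs_le_one x).mpr (abs_le.mpr ⟨hx₀, hx₁⟩))
  rw [zpow_neg, zpow_neg, zpow_ofNat, zpow_ofNat]
  gcongr

theorem pSucc_eq_of_sin_half_eq {φ : ℝ} (hφ : φ ∈ Set.Icc 0 π)
    (hsin : sin (φ / 2) = (2 + √2) / 4) : pSucc φ = (2 + √2) ^ (-2 : ℤ) := by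
  have hx : 2 * sin (φ / 2) - 1 = √2 / 2 := by rw [hsin]; ring
  rw [pSucc_eq hφ, hx, sqrt_two_div_two_add_sqrt_one_sub_sq]

theorem sin_one_lt_two_add_sqrt_two_div_four : sin 1 < (2 + √2) / 4 := by
  have hsin : sin 1 ≤ 1 - 1 / 6 + 1 / 100 := by
    have htaylor := (abs_le.mp (sin_bound (x := 1) abs_one.le)).2
    norm_num at htaylor ⊢
    linarith
  have hsqrt : (1.4 : ℝ) < √2 := lt_sqrt_of_sq_lt (by norm_num)
  linarith

theorem two_add_sqrt_two_div_four_lt_sin_pi_div_three : (2 + √2) / 4 < sin (π / 3) := by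
  have h₂ : √2 < 1.42 := (sqrt_lt' (by norm_num)).mpr (by norm_num)
  have h₃ : (1.72 : ℝ) < √3 := lt_sqrt_of_sq_lt (by norm_num)
  rw [sin_pi_div_three]
  linarith

theorem exists_mem_Ioo_sin_eq_two_add_sqrt_two_div_four :
    ∃ x ∈ Set.Ioo 1 (π / 3), sin x = (2 + √2) / 4 :=
  intermediate_value_Ioo (by linarith [pi_gt_three]) continuous_sin.continuousOn
    ⟨sin_one_lt_two_add_sqrt_two_div_four, two_add_sqrt_two_div_four_lt_sin_pi_div_three⟩

theorem stmt_7 :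
    ∃ φstar ∈ Set.Ioo (2 : ℝ) 2.1,
      ∀ φ ∈ Set.Icc (0 : ℝ) Real.pi, pSucc φstar ≤ pSucc φ := by
  obtain ⟨x, ⟨hx₁, hx₂⟩, hsin⟩ := exists_mem_Ioo_sin_eq_two_add_sqrt_two_div_four
  have hmem : 2 * x ∈ Set.Icc 0 π := ⟨by linarith, by linarith [pi_pos]⟩
  have hmin : pSucc (2 * x) = (2 + √2) ^ (-2 : ℤ) :=
    pSucc_eq_of_sin_half_eq hmem (by rw [mul_div_cancel_left₀ x two_ne_zero, hsin])
  refine ⟨2 * x, ⟨by linarith, by linarith [pi_lt_d2]⟩, fun φ hφ => ?_⟩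
  rw [hmin]
  exact two_add_sqrt_two_zpow_neg_two_le_pSucc hφ
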